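/- Let X_n (n ∈ ℕ) and X be real-valued random variables whose moment generating functions M_{X_n}(s) = E[e^{s X_n}] and M_X(s) = E[e^{s X}] are finite for all s in a nonempty open interval U ⊆ ℝ. If M_{X_n}(s) → M_X(s) for every s ∈ U, then X_n converges in distribution to X. -/

import Mathlib

namespace CurtissAux
open MeasureTheory ProbabilityTheory Filter Topology

/-- Fatou-type lemma for weak convergence. -/
lemma fatou {ρ : ℕ → ProbabilityMeasure ℝ} {ρ' : ProbabilityMeasure ℝ}
    (h : Tendsto ρ atTop (𝓝 ρ')) {f : ℝ → ℝ} (hf : Continuous f) (hnn : 0 ≤ f)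
    (hint : ∀ n, Integrable f (ρ n : Measure ℝ)) {c : ℝ}
    (hc : Tendsto (fun n => ∫ x, f x ∂(ρ n : Measure ℝ)) atTop (𝓝 c)) :
    Integrable f (ρ' : Measure ℝ) ∧ ∫ x, f x ∂(ρ' : Measure ℝ) ≤ c := by
  have h1 := lintegral_le_liminf_lintegral_of_forall_isOpen_measure_le_liminf_measure
    (μ := (ρ' : Measure ℝ)) (μs := fun n => (ρ n : Measure ℝ)) hf hnn
    (fun G hG => ProbabilityMeasure.le_liminf_measure_open_of_tendsto h hG)
  have h2 : Tendsto (fun n => ∫⁻ x, ENNReal.ofReal (f x) ∂(ρ n : Measure ℝ)) atTop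
      (𝓝 (ENNReal.ofReal c)) := by
    have := (ENNReal.continuous_ofReal.tendsto c).comp hc
    refine this.congr fun n => ?_
    exact ofReal_integral_eq_lintegral_ofReal (hint n) (ae_of_all _ hnn)
  rw [h2.liminf_eq] at h1
  have hc0 : 0 ≤ c := ge_of_tendsto' hc fun n => integral_nonneg hnn
  have hI : Integrable f (ρ' : Measure ℝ) := by
    refine ⟨hf.aestronglyMeasurable, ?_⟩
    rw [hasFiniteIntegral_iff_ofReal (ae_of_all _ hnn)]
    exact h1.trans_lt ENNReal.ofReal_lt_top
  refine ⟨hI, ?_⟩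
  rw [← ofReal_integral_eq_lintegral_ofReal hI (ae_of_all _ hnn)] at h1
  exact (ENNReal.ofReal_le_ofReal_iff hc0).1 h1

lemma mgf_limit {ρ : ℕ → ProbabilityMeasure ℝ} {ρ' : ProbabilityMeasure ℝ}
    (h : Tendsto ρ atTop (𝓝 ρ')) {t a b : ℝ}
    (h1 : ∀ n, Integrable (fun x => Real.exp (t * x)) (ρ n : Measure ℝ))
    (h2 : ∀ n, Integrable (fun x => Real.exp (2 * t * x)) (ρ n : Measure ℝ))
    (ha : Tendsto (fun n => mgf id (ρ n : Measure ℝ) t) atTop (𝓝 a))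
    (hb : Tendsto (fun n => mgf id (ρ n : Measure ℝ) (2 * t)) atTop (𝓝 b)) :
    Integrable (fun x => Real.exp (t * x)) (ρ' : Measure ℝ) ∧ mgf id (ρ' : Measure ℝ) t = a := by
  simp only [mgf, id] at ha hb ⊢
  obtain ⟨i1, l1⟩ := fatou h (f := fun x => Real.exp (t * x)) (by fun_prop)
    (fun x => (Real.exp_pos _).le) h1 ha
  obtain ⟨i2, l2⟩ := fatou h (f := fun x => Real.exp (2 * t * x)) (by fun_prop)
    (fun x => (Real.exp_pos _).le) h2 hb
  refine ⟨i1, le_antisymm l1 ?_⟩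
  have hsq : ∀ K x : ℝ, (Real.exp (t * x) - K) ^ 2
      = Real.exp (2 * t * x) - 2 * K * Real.exp (t * x) + K ^ 2 := by
    intro K x
    have : Real.exp (2 * t * x) = Real.exp (t * x) ^ 2 := by
      rw [← Real.exp_nat_mul]; congr 1; push_cast; ring
    rw [this]; ring
  have hint : ∀ (K : ℝ) (m : Measure ℝ) [IsProbabilityMeasure m],
      Integrable (fun x => Real.exp (t * x)) m → Integrable (fun x => Real.exp (2 * t * x)) m →
      Integrable (fun x => (Real.exp (t * x) - K) ^ 2) m ∧
      ∫ x, (Real.exp (t * x) - K) ^ 2 ∂m =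
        ∫ x, Real.exp (2 * t * x) ∂m - 2 * K * ∫ x, Real.exp (t * x) ∂m + K ^ 2 := by
    intro K m _ j1 j2
    simp_rw [hsq K]
    have j3 := j1.const_mul (2 * K)
    refine ⟨(j2.sub j3).add (integrable_const _), ?_⟩
    rw [integral_add (by exact j2.sub j3) (integrable_const _), integral_sub j2 j3,
      integral_const_mul]
    simp
  have key : ∀ K : ℝ, 2 * K * (a - ∫ x, Real.exp (t * x) ∂(ρ' : Measure ℝ)) ≤ b := by
    intro K
    obtain ⟨-, l3⟩ := fatou h (f := fun x => (Real.exp (t * x) - K) ^ 2) (by fun_prop)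
      (fun x => sq_nonneg _) (fun n => (hint K _ (h1 n) (h2 n)).1)
      (c := b - 2 * K * a + K ^ 2) (by
        refine ((hb.sub (ha.const_mul (2 * K))).add_const (K ^ 2)).congr fun n => ?_
        exact (hint K _ (h1 n) (h2 n)).2.symm)
    rw [(hint K _ i1 i2).2] at l3
    have : 0 ≤ ∫ x, Real.exp (2 * t * x) ∂(ρ' : Measure ℝ) :=
      integral_nonneg fun x => (Real.exp_pos _).le
    linarith
  by_contra hlt
  push Not at hlt
  set d := a - ∫ x, Real.exp (t * x) ∂(ρ' : Measure ℝ) with hd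
  have hd0 : 0 < d := by rw [hd]; linarith
  have := key ((b + 1) / (2 * d))
  have e : 2 * ((b + 1) / (2 * d)) * d = b + 1 := by field_simp
  linarith

lemma ext_local {m m' : Measure ℝ} [IsProbabilityMeasure m] [IsProbabilityMeasure m'] {ε : ℝ}
    (hε : 0 < ε)
    (h1 : ∀ t ∈ Set.Ioo (-ε) ε, Integrable (fun x => Real.exp (t * x)) m)
    (h2 : ∀ t ∈ Set.Ioo (-ε) ε, Integrable (fun x => Real.exp (t * x)) m')
    (h : ∀ t ∈ Set.Ioo (-ε) ε, mgf id m t = mgf id m' t) : m = m' := by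
  have s1 : Set.Ioo (-ε) ε ⊆ interior (integrableExpSet id m) :=
    interior_maximal (fun t ht => h1 t ht) isOpen_Ioo
  have s2 : Set.Ioo (-ε) ε ⊆ interior (integrableExpSet id m') :=
    interior_maximal (fun t ht => h2 t ht) isOpen_Ioo
  have hX : AnalyticOnNhd ℂ (complexMGF id m) {z | z.re ∈ Set.Ioo (-ε) ε} :=
    analyticOnNhd_complexMGF.mono fun z hz => s1 hz
  have hY : AnalyticOnNhd ℂ (complexMGF id m') {z | z.re ∈ Set.Ioo (-ε) ε} :=
    analyticOnNhd_complexMGF.mono fun z hz => s2 hz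
  have h0 : (0 : ℝ) ∈ Set.Ioo (-ε) ε := ⟨by linarith, hε⟩
  have hEq : Set.EqOn (complexMGF id m) (complexMGF id m') {z | z.re ∈ Set.Ioo (-ε) ε} := by
    refine AnalyticOnNhd.eqOn_of_preconnected_of_frequently_eq hX hY
      ((convex_Ioo (-ε) ε).linear_preimage Complex.reLm).isPreconnected
      (z₀ := ((0 : ℝ) : ℂ)) (by simpa using hε) ?_
    have h_real : ∃ᶠ (x : ℝ) in 𝓝[≠] 0, complexMGF id m x = complexMGF id m' x := by
      refine Eventually.frequently ?_
      filter_upwards [mem_nhdsWithin_of_mem_nhds (isOpen_Ioo.mem_nhds h0)] with y hy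
      rw [complexMGF_ofReal, complexMGF_ofReal, h y hy]
    rw [frequently_iff_seq_forall] at h_real ⊢
    obtain ⟨xs, hx_tendsto, hx_eq⟩ := h_real
    refine ⟨fun n ↦ xs n, ?_, fun n ↦ ?_⟩
    · rw [tendsto_nhdsWithin_iff] at hx_tendsto ⊢
      constructor
      · exact (Complex.continuous_ofReal.tendsto 0).comp hx_tendsto.1
      · simpa using hx_tendsto.2
    · simp [hx_eq]
  refine Measure.ext_of_charFun ?_
  ext t
  rw [← complexMGF_id_mul_I, ← complexMGF_id_mul_I]
  exact hEq (by simpa using hε)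

lemma tight {ρ : ℕ → ProbabilityMeasure ℝ} {ε a b : ℝ} (hε : 0 < ε)
    (h1 : ∀ n, Integrable (fun x => Real.exp (ε * x)) (ρ n : Measure ℝ))
    (h2 : ∀ n, Integrable (fun x => Real.exp (-ε * x)) (ρ n : Measure ℝ))
    (ha : Tendsto (fun n => mgf id (ρ n : Measure ℝ) ε) atTop (𝓝 a))
    (hb : Tendsto (fun n => mgf id (ρ n : Measure ℝ) (-ε)) atTop (𝓝 b)) :
    IsTightMeasureSet (Set.range fun n => (ρ n : Measure ℝ)) := by
  obtain ⟨A, hA⟩ := ha.bddAbove_range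
  obtain ⟨B, hB⟩ := hb.bddAbove_range
  have hA : ∀ n, mgf id (ρ n : Measure ℝ) ε ≤ A := fun n => hA ⟨n, rfl⟩
  have hB : ∀ n, mgf id (ρ n : Measure ℝ) (-ε) ≤ B := fun n => hB ⟨n, rfl⟩
  refine isTightMeasureSet_of_tendsto_measure_norm_gt ?_
  have hlim : Tendsto (fun r : ℝ => ENNReal.ofReal (Real.exp (-ε * r) * A + Real.exp (-ε * r) * B))
      atTop (𝓝 0) := by
    rw [← ENNReal.ofReal_zero]
    refine (ENNReal.continuous_ofReal.tendsto 0).comp ?_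
    have : Tendsto (fun r : ℝ => Real.exp (-ε * r)) atTop (𝓝 0) :=
      Real.tendsto_exp_atBot.comp (tendsto_id.const_mul_atTop_of_neg (by linarith))
    simpa using (this.mul_const A).add (this.mul_const B)
  refine tendsto_of_tendsto_of_tendsto_of_le_of_le tendsto_const_nhds hlim (fun _ => zero_le) ?_
  intro r
  refine iSup₂_le ?_
  rintro _ ⟨n, rfl⟩
  have c1 := measure_ge_le_exp_mul_mgf (μ := (ρ n : Measure ℝ)) (X := id) r hε.le (h1 n)
  have c2 := measure_le_le_exp_mul_mgf (μ := (ρ n : Measure ℝ)) (X := id) (t := -ε) (-r)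
    (by linarith) (h2 n)
  have hsub : {x : ℝ | r < ‖x‖} ⊆ {x | r ≤ id x} ∪ {x | id x ≤ -r} := by
    intro x hx
    simp only [Set.mem_ofPred_eq, Real.norm_eq_abs, lt_abs] at hx
    rcases hx with hx | hx
    · exact Or.inl hx.le
    · right; simp only [Set.mem_ofPred_eq, id]; linarith
  change (ρ n : Measure ℝ) _ ≤ _
  rw [← ENNReal.ofReal_toReal (measure_ne_top (ρ n : Measure ℝ) {x : ℝ | r < ‖x‖})]
  refine ENNReal.ofReal_le_ofReal ?_
  calc (ρ n : Measure ℝ).real {x : ℝ | r < ‖x‖}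
      ≤ (ρ n : Measure ℝ).real ({x | r ≤ id x} ∪ {x | id x ≤ -r}) := measureReal_mono hsub
    _ ≤ _ := measureReal_union_le _ _
    _ ≤ _ := add_le_add c1 c2
    _ ≤ _ := by
      have e : -(-ε) * -r = -ε * r := by ring
      rw [e]
      gcongr
      · exact hA n
      · exact hB n

/-- Curtiss around `0`. -/
lemma curtiss_zero {ρ : ℕ → ProbabilityMeasure ℝ} {ρ₀ : ProbabilityMeasure ℝ} {ε : ℝ} (hε : 0 < ε)
    (h1 : ∀ n, ∀ t ∈ Set.Icc (-ε) ε, Integrable (fun x => Real.exp (t * x)) (ρ n : Measure ℝ))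
    (h2 : ∀ t ∈ Set.Icc (-ε) ε, Integrable (fun x => Real.exp (t * x)) (ρ₀ : Measure ℝ))
    (h : ∀ t ∈ Set.Icc (-ε) ε,
      Tendsto (fun n => mgf id (ρ n : Measure ℝ) t) atTop (𝓝 (mgf id (ρ₀ : Measure ℝ) t))) :
    Tendsto ρ atTop (𝓝 ρ₀) := by
  have he : ε ∈ Set.Icc (-ε) ε := ⟨by linarith, le_rfl⟩
  have he' : -ε ∈ Set.Icc (-ε) ε := ⟨le_rfl, by linarith⟩
  have ht := tight hε (fun n => h1 n _ he) (fun n => h1 n _ he') (h _ he) (h _ he')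
  have hc : IsCompact (closure (Set.range ρ)) := by
    refine isCompact_closure_of_isTightMeasureSet ?_
    convert ht using 1
    ext m; simp
  refine tendsto_of_subseq_tendsto fun ns hns => ?_
  obtain ⟨ρ', -, φ, hφ, hlim⟩ := hc.isSeqCompact (x := fun n => ρ (ns n))
    (fun n => subset_closure ⟨ns n, rfl⟩)
  refine ⟨φ, ?_⟩
  have hto : Tendsto (fun k => ns (φ k)) atTop atTop := hns.comp hφ.tendsto_atTop
  have hm : ∀ t ∈ Set.Ioo (-(ε / 2)) (ε / 2),
      Integrable (fun x => Real.exp (t * x)) (ρ' : Measure ℝ) ∧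
      mgf id (ρ' : Measure ℝ) t = mgf id (ρ₀ : Measure ℝ) t := by
    intro t ht
    have m1 : t ∈ Set.Icc (-ε) ε := ⟨by linarith [ht.1], by linarith [ht.2]⟩
    have m2 : 2 * t ∈ Set.Icc (-ε) ε := ⟨by linarith [ht.1], by linarith [ht.2]⟩
    exact mgf_limit hlim (fun n => h1 _ _ m1) (fun n => h1 _ _ m2)
      ((h _ m1).comp hto) ((h _ m2).comp hto)
  have : ρ' = ρ₀ := by
    apply Subtype.ext
    exact ext_local (m := (ρ' : Measure ℝ)) (m' := (ρ₀ : Measure ℝ)) (half_pos hε) (fun t ht => (hm t ht).1)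
      (fun t ht => h2 t ⟨by linarith [ht.1], by linarith [ht.2]⟩) (fun t ht => (hm t ht).2)
  rw [← this]
  exact hlim

lemma detilt {m : Measure ℝ} [IsProbabilityMeasure m] {s : ℝ}
    (hs : Integrable (fun x => Real.exp (s * x)) m) {G : Set ℝ} (hG : MeasurableSet G) :
    m G = ENNReal.ofReal (mgf id m s) *
      ∫⁻ x in G, ENNReal.ofReal (Real.exp (-(s * x))) ∂(m.tilted (fun x => s * x)) := by
  have hpos : 0 < mgf id m s := mgf_pos hs
  rw [setLIntegral_tilted' _ _ hG, ← lintegral_const_mul' _ _ ENNReal.ofReal_ne_top]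
  have : ∀ x : ℝ, ENNReal.ofReal (mgf id m s) *
      (ENNReal.ofReal (Real.exp (s * x) / ∫ x, Real.exp (s * x) ∂m) *
        ENNReal.ofReal (Real.exp (-(s * x)))) = 1 := by
    intro x
    rw [← ENNReal.ofReal_mul (by positivity), ← ENNReal.ofReal_mul hpos.le, ← ENNReal.ofReal_one]
    congr 1
    have e : mgf id m s = ∫ x, Real.exp (s * x) ∂m := rfl
    rw [← e, Real.exp_neg]
    field_simp
  simp_rw [this]
  simp

lemma mgf_tilt (m : Measure ℝ) (s t : ℝ) :
    mgf id (m.tilted (fun x => s * x)) t = mgf id m (s + t) / mgf id m s := by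
  simp only [mgf, id]
  rw [integral_exp_tilted]
  simp [add_mul]

lemma int_tilt {m : Measure ℝ} {s t : ℝ} (hs : Integrable (fun x => Real.exp (s * x)) m)
    (hst : Integrable (fun x => Real.exp ((s + t) * x)) m) :
    Integrable (fun x => Real.exp (t * x)) (m.tilted (fun x => s * x)) := by
  rw [integrable_tilted_iff hs]
  simpa [add_mul, Real.exp_add] using hst

lemma curtiss_measure {κ : ℕ → ProbabilityMeasure ℝ} {κ₀ : ProbabilityMeasure ℝ} {s ε : ℝ}
    (hε : 0 < ε)
    (h1 : ∀ n, ∀ t ∈ Set.Icc (s - ε) (s + ε),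
      Integrable (fun x => Real.exp (t * x)) (κ n : Measure ℝ))
    (h2 : ∀ t ∈ Set.Icc (s - ε) (s + ε), Integrable (fun x => Real.exp (t * x)) (κ₀ : Measure ℝ))
    (h : ∀ t ∈ Set.Icc (s - ε) (s + ε),
      Tendsto (fun n => mgf id (κ n : Measure ℝ) t) atTop (𝓝 (mgf id (κ₀ : Measure ℝ) t))) :
    Tendsto κ atTop (𝓝 κ₀) := by
  have hs : s ∈ Set.Icc (s - ε) (s + ε) := ⟨by linarith, by linarith⟩
  have hmem : ∀ t ∈ Set.Icc (-ε) ε, s + t ∈ Set.Icc (s - ε) (s + ε) :=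
    fun t ht => ⟨by linarith [ht.1], by linarith [ht.2]⟩
  have hpos : 0 < mgf id (κ₀ : Measure ℝ) s := mgf_pos (h2 s hs)
  let ρ : ℕ → ProbabilityMeasure ℝ := fun n =>
    ⟨(κ n : Measure ℝ).tilted (fun x => s * x), isProbabilityMeasure_tilted (h1 n s hs)⟩
  let ρ₀ : ProbabilityMeasure ℝ :=
    ⟨(κ₀ : Measure ℝ).tilted (fun x => s * x), isProbabilityMeasure_tilted (h2 s hs)⟩
  have hρ : Tendsto ρ atTop (𝓝 ρ₀) := by
    refine curtiss_zero hε (fun n t ht => int_tilt (h1 n s hs) (h1 n _ (hmem t ht)))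
      (fun t ht => int_tilt (h2 s hs) (h2 _ (hmem t ht))) fun t ht => ?_
    change Tendsto (fun n => mgf id ((κ n : Measure ℝ).tilted (fun x => s * x)) t) atTop
      (𝓝 (mgf id ((κ₀ : Measure ℝ).tilted (fun x => s * x)) t))
    simp_rw [mgf_tilt]
    exact (h _ (hmem t ht)).div (h s hs) hpos.ne'
  refine tendsto_of_forall_isOpen_le_liminf_nat' fun G hG => ?_
  have hl := lintegral_le_liminf_lintegral_of_forall_isOpen_measure_le_liminf_measure
    (μ := (ρ₀ : Measure ℝ).restrict G) (μs := fun n => (ρ n : Measure ℝ).restrict G)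
    (f := fun x => Real.exp (-(s * x))) (by fun_prop) (fun x => (Real.exp_pos _).le)
    (fun O hO => by
      simp_rw [Measure.restrict_apply hO.measurableSet]
      exact ProbabilityMeasure.le_liminf_measure_open_of_tendsto hρ (hO.inter hG))
  have hM : Tendsto (fun n => ENNReal.ofReal (mgf id (κ n : Measure ℝ) s)) atTop
      (𝓝 (ENNReal.ofReal (mgf id (κ₀ : Measure ℝ) s))) :=
    (ENNReal.continuous_ofReal.tendsto _).comp (h s hs)
  rw [detilt (h2 s hs) hG.measurableSet]
  simp_rw [fun n => detilt (h1 n s hs) hG.measurableSet]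
  calc _ ≤ ENNReal.ofReal (mgf id (κ₀ : Measure ℝ) s) * _ := mul_le_mul_right hl _
    _ = liminf (fun n => ENNReal.ofReal (mgf id (κ n : Measure ℝ) s)) atTop * _ := by
      rw [hM.liminf_eq]
      rfl
    _ ≤ _ := ENNReal.le_liminf_mul

end CurtissAux

open MeasureTheory ProbabilityTheory Filter in
/-- Modified Curtiss theorem (Kim–Lee): if the moment generating functions of real random
variables `X n` and `Y` are finite on a nonempty open set `U ⊆ ℝ` and
`mgf (X n) s → mgf Y s` for every `s ∈ U`, then `X n` converges in distribution to `Y`,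
i.e. the CDFs converge at every continuity point of the CDF of `Y`. -/
theorem curtiss_modified {Ω : Type*} [MeasurableSpace Ω] (μ : Measure Ω)
    [IsProbabilityMeasure μ] (X : ℕ → Ω → ℝ) (Y : Ω → ℝ)
    (hX : ∀ n, Measurable (X n)) (hY : Measurable Y)
    (U : Set ℝ) (hU : IsOpen U) (hUne : U.Nonempty)
    (hintX : ∀ s ∈ U, ∀ n, Integrable (fun ω => Real.exp (s * X n ω)) μ)
    (hintY : ∀ s ∈ U, Integrable (fun ω => Real.exp (s * Y ω)) μ)
    (hconv : ∀ s ∈ U, Tendsto (fun n => mgf (X n) μ s) atTop (nhds (mgf Y μ s))) :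
    ∀ x : ℝ, ContinuousAt (cdf (μ.map Y)) x →
      Tendsto (fun n => cdf (μ.map (X n)) x) atTop (nhds (cdf (μ.map Y) x)) := by
  intro x hx
  obtain ⟨s, hs⟩ := hUne
  obtain ⟨ε, hε, hball⟩ := Metric.nhds_basis_closedBall.mem_iff.1 (hU.mem_nhds hs)
  rw [Real.closedBall_eq_Icc] at hball
  have hpY : IsProbabilityMeasure (μ.map Y) := Measure.isProbabilityMeasure_map hY.aemeasurable
  have hpX : ∀ n, IsProbabilityMeasure (μ.map (X n)) :=
    fun n => Measure.isProbabilityMeasure_map (hX n).aemeasurable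
  let κ : ℕ → ProbabilityMeasure ℝ := fun n => ⟨μ.map (X n), hpX n⟩
  let κ₀ : ProbabilityMeasure ℝ := ⟨μ.map Y, hpY⟩
  have hκ : Tendsto κ atTop (nhds κ₀) := by
    refine CurtissAux.curtiss_measure (s := s) hε (fun n t ht => ?_) (fun t ht => ?_)
      (fun t ht => ?_)
    · exact (integrable_map_measure (by fun_prop) (hX n).aemeasurable).2 (hintX t (hball ht) n)
    · exact (integrable_map_measure (by fun_prop) hY.aemeasurable).2 (hintY t (hball ht))
    · change Tendsto (fun n => mgf id (μ.map (X n)) t) atTop (nhds (mgf id (μ.map Y) t))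
      rw [mgf_id_map hY.aemeasurable]
      refine (hconv t (hball ht)).congr fun n => ?_
      rw [mgf_id_map (hX n).aemeasurable]
  have hnull : (κ₀ : Measure ℝ) (frontier (Set.Iic x)) = 0 := by
    rw [frontier_Iic]
    change (μ.map Y) {x} = 0
    rw [← measure_cdf (μ.map Y), StieltjesFunction.measure_singleton,
      leftLim_eq_of_tendsto (hx.tendsto.mono_left nhdsWithin_le_nhds)]
    simp
  have := ProbabilityMeasure.tendsto_measure_of_null_frontier_of_tendsto' hκ hnull
  have := (ENNReal.tendsto_toReal (measure_ne_top _ _)).comp this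
  simp_rw [cdf_eq_real]
  exact this
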